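/- arXiv:1312.3889 — 2 statements merged into one kernel-verified Lean document; each statement's English description precedes it below -/
import Mathlib

section
/- Let K be a finite field, let L be the quadratic extension of K (so K ⊆ L with [L : K] = 2), and let d be an integer with gcd(d, |L| − 1) = 1. Then ∑_{a ∈ K^×} W_{L,d}(a) = |L|. -/
open scoped BigOperators Classical

/-- The canonical additive character of a finite field `K` of characteristic `p`:
`ψ_K(x) = exp(2πi · Tr_{K/F_p}(x) / p)`, where `Tr_{K/F_p}` is the absolute trace. -/
noncomputable def canonicalAddChar (p : ℕ) [Fact p.Prime] (K : Type) [Field K] [Fintype K]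
    [Algebra (ZMod p) K] (x : K) : ℂ :=
  Complex.exp (2 * Real.pi * Complex.I * ((Algebra.trace (ZMod p) K x).val : ℂ) / (p : ℂ))

/-- The Weil sum `W_{K,d}(a) = ∑_{x ∈ K} ψ_K(x^d + a·x)`. -/
noncomputable def weilSum (p : ℕ) [Fact p.Prime] (K : Type) [Field K] [Fintype K]
    [Algebra (ZMod p) K] (d : ℤ) (a : K) : ℂ :=
  ∑ x : K, canonicalAddChar p K (x ^ d + a * x)

/-- The value set `{W_{K,d}(a) : a ∈ K^×}` of the Weil sum. -/
noncomputable def weilValues (p : ℕ) [Fact p.Prime] (K : Type) [Field K] [Fintype K]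
    [Algebra (ZMod p) K] (d : ℤ) : Set ℂ :=
  {w : ℂ | ∃ a : K, a ≠ 0 ∧ weilSum p K d a = w}

/-- `d` is degenerate over a finite field of order `q` and characteristic `p` if
`d ≡ p^j (mod q − 1)` for some nonnegative integer `j`. -/
def IsDegenerate (p : ℕ) (q : ℕ) (d : ℤ) : Prop :=
  ∃ j : ℕ, d ≡ (p : ℤ) ^ j [ZMOD (q : ℤ) - 1]

/-! Summing first over `a ∈ K`, orthogonality for the characters `a ↦ ψ_L(a * x)` of `K` leaves only
the `x` with `Tr_{L/K}(x) = 0`. In a quadratic extension these are the `x` with `x ^ |K| = -x`, a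
condition preserved by `x ↦ x ^ d`, so the factor `ψ_L(x ^ d)` is `1` on all surviving terms and
may be dropped. What remains, `∑ a ∈ K, ∑ x ∈ L, ψ_L(a * x)`, equals `|L|` by orthogonality on `L`.
The omitted summand `W_{L,d}(0)` vanishes because `x ↦ x ^ d` permutes `L`. -/

open Function

section AddCharSums

variable {K V R : Type*} [DivisionRing K] [AddCommGroup V] [Fintype V] [Module K V]
  [CommRing R] [IsDomain R] {ψ : AddChar V R}

theorem sum_vectors_addChar_smul_eq_zero (hψ : ψ ≠ 1) {a : K} (ha : a ≠ 0) :
    ∑ x : V, ψ (a • x) = 0 :=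
  ((MulAction.bijective₀ ha).sum_comp ψ).trans (AddChar.sum_eq_zero_of_ne_one hψ)

theorem sum_sum_addChar_smul [Fintype K] (hψ : ψ ≠ 1) :
    ∑ a : K, ∑ x : V, ψ (a • x) = Fintype.card V := by
  rw [Fintype.sum_eq_single (0 : K) fun a ha ↦ sum_vectors_addChar_smul_eq_zero hψ ha]
  simp

omit [Fintype V] in
theorem sum_scalars_addChar_smul_eq_zero [Fintype K] {x : V} {b : K} (hb : ψ (b • x) ≠ 1) :
    ∑ a : K, ψ (a • x) = 0 :=
  AddChar.sum_eq_zero_of_ne_one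
    (ψ := ψ.compAddMonoidHom (LinearMap.toSpanSingleton K V x).toAddMonoidHom)
    (AddChar.ne_one_iff.mpr ⟨b, hb⟩)

theorem sum_sum_mul_addChar_smul [Fintype K] (hψ : ψ ≠ 1) {g : V → R}
    (hg : ∀ x, (∀ a : K, ψ (a • x) = 1) → g x = 1) :
    ∑ a : K, ∑ x, g x * ψ (a • x) = Fintype.card V := by
  have drop_weight (x : V) : ∑ a : K, g x * ψ (a • x) = ∑ a : K, ψ (a • x) := by
    rw [← Finset.mul_sum]
    by_cases hx : ∀ a : K, ψ (a • x) = 1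
    · rw [hg x hx, one_mul]
    · obtain ⟨b, hb⟩ := not_forall.mp hx
      rw [sum_scalars_addChar_smul_eq_zero hb, mul_zero]
  calc ∑ a : K, ∑ x, g x * ψ (a • x)
      = ∑ x, ∑ a : K, g x * ψ (a • x) := Finset.sum_comm
    _ = ∑ x, ∑ a : K, ψ (a • x) := Finset.sum_congr rfl fun x _ ↦ drop_weight x
    _ = ∑ a : K, ∑ x, ψ (a • x) := Finset.sum_comm
    _ = Fintype.card V := sum_sum_addChar_smul hψ

theorem sum_eq_zero_add_sum_units {G₀ M : Type*} [GroupWithZero G₀] [Fintype G₀] [Fintype G₀ˣ]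
    [AddCommMonoid M] (f : G₀ → M) : ∑ a, f a = f 0 + ∑ a : G₀ˣ, f a := by
  classical
  rw [Fintype.sum_eq_add_sum_subtype_ne f 0]
  exact congrArg (f 0 + ·) (unitsEquivNeZero.sum_comp fun a : {a : G₀ // a ≠ 0} ↦ f a).symm

theorem sum_units_sum_addChar_add_smul [Finite K] [Fintype Kˣ] (hψ : ψ ≠ 1) {f : V → V}
    (hf : Bijective f) (hperp : ∀ x, (∀ a : K, ψ (a • x) = 1) → ψ (f x) = 1) :
    ∑ a : Kˣ, ∑ x, ψ (f x + (a : K) • x) = Fintype.card V := by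
  have := Fintype.ofFinite K
  have zero_term : ∑ x, ψ (f x + (0 : K) • x) = 0 := by
    simp only [zero_smul, add_zero]
    exact (hf.sum_comp ψ).trans (AddChar.sum_eq_zero_of_ne_one hψ)
  calc ∑ a : Kˣ, ∑ x, ψ (f x + (a : K) • x)
      = ∑ a : K, ∑ x, ψ (f x + a • x) := by
        rw [sum_eq_zero_add_sum_units (G₀ := K), zero_term, zero_add]
    _ = ∑ a : K, ∑ x, ψ (f x) * ψ (a • x) := by simp only [AddChar.map_add_eq_mul]
    _ = Fintype.card V := sum_sum_mul_addChar_smul hψ hperp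

end AddCharSums

section TraceAddChar

variable (p : ℕ) [Fact p.Prime] (L : Type*) [Field L] [Algebra (ZMod p) L]

/-- The function `canonicalAddChar` bundled as an `AddChar`, for use with the orthogonality
relations: the pullback along the absolute trace of the standard character of `ZMod p`. -/
noncomputable def traceAddChar : AddChar L ℂ :=
  (ZMod.stdAddChar (N := p)).compAddMonoidHom (Algebra.trace (ZMod p) L).toAddMonoidHom

variable {p L}

theorem traceAddChar_eq_one_iff {x : L} :
    traceAddChar p L x = 1 ↔ Algebra.trace (ZMod p) L x = 0 := by
  rw [← AddChar.map_zero_eq_one (ZMod.stdAddChar (N := p))]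
  exact ZMod.injective_stdAddChar.eq_iff

theorem traceAddChar_ne_one [Finite L] : traceAddChar p L ≠ 1 := by
  obtain ⟨x, hx⟩ := Algebra.trace_surjective (ZMod p) L 1
  refine AddChar.ne_one_iff.mpr ⟨x, fun h ↦ one_ne_zero (α := ZMod p) ?_⟩
  rw [← hx, traceAddChar_eq_one_iff.mp h]

theorem canonicalAddChar_eq_traceAddChar {L : Type} [Field L] [Fintype L]
    [Algebra (ZMod p) L] (x : L) :
    canonicalAddChar p L x = traceAddChar p L x :=
  (ZMod.toCircle_apply _).symm

end TraceAddChar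

theorem trace_eq_zero_of_forall_trace_smul_eq_zero {F K L : Type*} [Field F] [Field K] [Field L]
    [Algebra F K] [Algebra F L] [Algebra K L] [IsScalarTower F K L] [FiniteDimensional F K]
    [FiniteDimensional K L] [Algebra.IsSeparable F K] {x : L}
    (hx : ∀ a : K, Algebra.trace F L (a • x) = 0) : Algebra.trace K L x = 0 := by
  refine (traceForm_nondegenerate F K).2 _ fun a ↦ ?_
  rw [Algebra.traceForm_apply, ← smul_eq_mul, ← map_smul, Algebra.trace_trace, hx]

section PowerMap

theorem zpow_left_injective_of_gcd_card_eq_one {G : Type*} [Group G] {d : ℤ}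
    (hd : Int.gcd d (Nat.card G) = 1) : Injective fun g : G ↦ g ^ d := by
  obtain ⟨u, v, huv⟩ := Int.isCoprime_iff_gcd_eq_one.mpr hd
  have recover (g : G) : (g ^ d) ^ u = g := by
    calc (g ^ d) ^ u = g ^ (u * d + v * Nat.card G) := by
          rw [zpow_add, mul_comm v, zpow_mul g _ v, zpow_natCast, pow_card_eq_one', one_zpow,
            mul_one, mul_comm, zpow_mul]
      _ = g := by rw [huv, zpow_one]
  exact LeftInverse.injective (g := (· ^ u)) recover

theorem zpow_left_injective₀_of_gcd_card_units_eq_one {G₀ : Type*} [GroupWithZero G₀] {d : ℤ}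
    (hd₀ : d ≠ 0) (hd : Int.gcd d (Nat.card G₀ˣ) = 1) : Injective fun x : G₀ ↦ x ^ d := by
  intro x y (hxy : x ^ d = y ^ d)
  have zero_iff : x = 0 ↔ y = 0 := by rw [← zpow_eq_zero_iff hd₀, hxy, zpow_eq_zero_iff hd₀]
  by_cases hy : y = 0
  · rw [zero_iff.mpr hy, hy]
  · lift y to G₀ˣ using IsUnit.mk0 y hy
    lift x to G₀ˣ using IsUnit.mk0 x (mt zero_iff.mp hy)
    exact congrArg _ (zpow_left_injective_of_gcd_card_eq_one hd (by exact_mod_cast hxy))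

theorem neg_zpow_of_injective {F : Type*} [DivisionRing F] {d : ℤ}
    (hinj : Injective fun x : F ↦ x ^ d) (x : F) : (-x) ^ d = -x ^ d := by
  rcases Int.even_or_odd d with heven | hodd
  · have neg_one_eq_one : (-1 : F) = 1 := hinj (heven.neg_zpow 1)
    rw [heven.neg_zpow, ← neg_one_mul (x ^ d), neg_one_eq_one, one_mul]
  · exact hodd.neg_zpow x

end PowerMap

section FiniteFieldExtension

variable {K L : Type*} [Field K] [Field L] [Algebra K L]

theorem two_lt_card_of_one_lt_finrank [Fintype L] (h : 1 < Module.finrank K L) :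
    2 < Fintype.card L := by
  have := Fintype.ofInjective _ (algebraMap K L).injective
  calc 2 ≤ Fintype.card K := Fintype.one_lt_card
    _ < Fintype.card K ^ Module.finrank K L := lt_self_pow₀ Fintype.one_lt_card h
    _ = Fintype.card L := Module.card_eq_pow_finrank.symm

theorem zpow_bijective_of_gcd_card_sub_one_eq_one [Fintype L] (hL : 2 < Fintype.card L) {d : ℤ}
    (hd : Int.gcd d ((Fintype.card L : ℤ) - 1) = 1) : Bijective fun x : L ↦ x ^ d := by
  -- For `|L| = 2` the exponent `0` would satisfy the gcd condition.
  have hd₀ : d ≠ 0 := by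
    rintro rfl
    rw [Int.gcd_zero_left] at hd
    lia
  have card_units : (Nat.card Lˣ : ℤ) = Fintype.card L - 1 := by
    rw [Nat.card_units, Nat.card_eq_fintype_card, Nat.cast_pred Fintype.card_pos]
  refine Finite.injective_iff_bijective.mp (zpow_left_injective₀_of_gcd_card_units_eq_one hd₀ ?_)
  rwa [card_units]

theorem trace_eq_zero_iff_pow_card_eq_neg [Finite L] (h2 : Module.finrank K L = 2) {x : L} :
    Algebra.trace K L x = 0 ↔ x ^ Nat.card K = -x := by
  rw [← map_eq_zero (algebraMap K L), FiniteField.algebraMap_trace_eq_sum_pow, h2,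
    Finset.sum_range_succ, Finset.sum_range_one, pow_zero, pow_one, pow_one, add_comm,
    add_eq_zero_iff_eq_neg]

theorem trace_zpow_eq_zero [Finite L] (h2 : Module.finrank K L = 2) {d : ℤ}
    (hinj : Injective fun x : L ↦ x ^ d) {x : L} (hx : Algebra.trace K L x = 0) :
    Algebra.trace K L (x ^ d) = 0 := by
  rw [trace_eq_zero_iff_pow_card_eq_neg h2] at hx ⊢
  calc (x ^ d) ^ Nat.card K = (x ^ Nat.card K) ^ d := by
        rw [← zpow_natCast, zpow_comm, zpow_natCast]
    _ = -x ^ d := by rw [hx, neg_zpow_of_injective hinj]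

end FiniteFieldExtension

theorem stmt13_general (p : ℕ) [Fact p.Prime] (K L : Type) [Field K] [Fintype Kˣ]
    [Field L] [Fintype L] [Algebra (ZMod p) L] [Algebra K L] (d : ℤ)
    (hd : Bijective fun x : L ↦ x ^ d)
    (htr : ∀ x : L, Algebra.trace K L x = 0 → Algebra.trace K L (x ^ d) = 0) :
    ∑ a : Kˣ, weilSum p L d (algebraMap K L (a : K)) = (Fintype.card L : ℂ) := by
  have : Finite K := .of_injective _ (algebraMap K L).injective
  have := charP_of_injective_algebraMap (algebraMap (ZMod p) L).injective p
  have := (algebraMap K L).charP (algebraMap K L).injective p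
  let := ZMod.algebra K p
  have : IsScalarTower (ZMod p) K L := .of_algebraMap_eq' (Subsingleton.elim _ _)
  have hperp (x : L) (hx : ∀ a : K, traceAddChar p L (a • x) = 1) :
      traceAddChar p L (x ^ d) = 1 := by
    simp only [traceAddChar_eq_one_iff] at hx ⊢
    have trace_zpow := htr x (trace_eq_zero_of_forall_trace_smul_eq_zero hx)
    rw [← Algebra.trace_trace (S := K), trace_zpow, map_zero]
  simp only [weilSum, canonicalAddChar_eq_traceAddChar, ← Algebra.smul_def]
  exact sum_units_sum_addChar_add_smul traceAddChar_ne_one hd hperp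

theorem stmt13 (p : ℕ) [Fact p.Prime] (K L : Type) [Field K] [Fintype K] [DecidableEq K]
    [Field L] [Fintype L] [CharP L p] [Algebra (ZMod p) L] [Algebra K L]
    (h2 : Module.finrank K L = 2)
    (d : ℤ) (hd : Int.gcd d ((Fintype.card L : ℤ) - 1) = 1) :
    ∑ a : Kˣ, weilSum p L d (algebraMap K L (a : K)) = (Fintype.card L : ℂ) := by
  have hbij := zpow_bijective_of_gcd_card_sub_one_eq_one
    (two_lt_card_of_one_lt_finrank (K := K) (h2 ▸ one_lt_two)) hd
  exact stmt13_general p K L d hbij fun _ ↦ trace_zpow_eq_zero h2 hbij.injective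
end

section
/- Let K be a finite field of characteristic p, let L be the quadratic extension of K (so K ⊆ L with [L : K] = 2), and let d be an integer with gcd(d, |L| − 1) = 1 that is degenerate over K but nondegenerate over L. Then for every a ∈ L the value W_{L,d}(a) is an integer multiple of |K| (i.e., W_{L,d}(a) = |K|·n for some n ∈ ℤ), and there exists a ∈ L^× with W_{L,d}(a) = −|K|; in particular the minimum p-adic valuation of the values W_{L,d}(a) over a ∈ L^× equals [K : F_p]. -/
open scoped BigOperators Classical

/-!
Write `q = |K|` and let `d ≡ p ^ j` modulo `q - 1`. Since `ψ_L` is Frobenius invariant, the Weil sum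
is `W(a) = ∑ y, ψ_K (T y)` with `T y = Tr_{L/K} (y ^ d + (a y) ^ (p ^ j))`, and `T` is homogeneous:
scaling `y` by `r ∈ K^×` multiplies `T y` by `r ^ (p ^ j)`. Averaging over `r` expresses `W(a)`
through the number of zeros of `T`, and these form lines over `K`, whence `W(a) = q (N - 1)` with
`N` the number of these lines.

The integers `n_a = W(a) / q ≥ -1` satisfy `∑ n_a = q` and `∑ n_a ^ 2 = q ^ 2` by orthogonality of
characters. If no `n_a` were negative, one of them would have to be `q`, that is, `W(a) = |L|`.
Then `Tr_{L/F_p} (v ^ d + a v)` would vanish identically; but `v ^ d` is one of the power functions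
of `v` occurring in it, with coefficient `1` because `d` is nondegenerate and coprime to `|L| - 1`.
-/

open scoped Finset

section ExponentialSums

variable {R : Type*} [CommRing R] [Fintype R]

lemma sum_sum_addChar_mul {R' ι : Type*} [CommRing R'] [IsDomain R'] [Fintype ι]
    {ψ : AddChar R R'} (hψ : ψ.IsPrimitive) (t : ι → R) :
    ∑ r, ∑ i, ψ (r * t i) = Fintype.card R * #{i | t i = 0} := by
  rw [Finset.sum_comm]
  simp_rw [AddChar.sum_mulShift _ hψ, Nat.cast_ite, Nat.cast_zero]
  rw [← Finset.sum_filter, Finset.sum_const, nsmul_eq_mul, mul_comm]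

lemma sum_sum_addChar_add_mul {R' : Type*} [CommRing R'] [IsDomain R']
    {ψ : AddChar R R'} (hψ : ψ.IsPrimitive) (f : R → R) :
    ∑ a, ∑ x, ψ (f x + a * x) = Fintype.card R * ψ (f 0) := by
  rw [Finset.sum_comm]
  simp_rw [AddChar.map_add_eq_mul, ← Finset.mul_sum, AddChar.sum_mulShift _ hψ]
  simp [mul_comm]

lemma sum_norm_sq_sum_addChar_add_mul {ψ : AddChar R ℂ} (hψ : ψ.IsPrimitive) (f : R → R) :
    ∑ a, (‖∑ x, ψ (f x + a * x)‖ : ℂ) ^ 2 = (Fintype.card R : ℂ) ^ 2 := by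
  have expand (a : R) : (‖∑ x, ψ (f x + a * x)‖ : ℂ) ^ 2 =
      ∑ x, ∑ y, ψ (f x - f y) * ψ (a * (x - y)) := by
    rw [← Complex.mul_conj', map_sum, Finset.sum_mul_sum]
    refine Finset.sum_congr rfl fun x _ => Finset.sum_congr rfl fun y _ => ?_
    rw [← AddChar.map_neg_eq_conj, ← AddChar.map_add_eq_mul, ← AddChar.map_add_eq_mul]
    congr 1
    ring
  calc ∑ a, (‖∑ x, ψ (f x + a * x)‖ : ℂ) ^ 2
      = ∑ x, ∑ y, ψ (f x - f y) * ∑ a, ψ (a * (x - y)) := by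
        simp_rw [expand, Finset.mul_sum]
        rw [Finset.sum_comm]
        exact Finset.sum_congr rfl fun x _ => Finset.sum_comm
    _ = (Fintype.card R : ℂ) ^ 2 := by
        simp_rw [AddChar.sum_mulShift _ hψ, sub_eq_zero]
        simp [sq]

end ExponentialSums

lemma eq_one_of_sum_eq_card {ι : Type*} [Fintype ι] {z : ι → ℂ} (hz : ∀ i, ‖z i‖ ≤ 1)
    (hsum : ∑ i, z i = Fintype.card ι) (i : ι) : z i = 1 := by
  have re_le (i : ι) : (z i).re ≤ 1 := (Complex.re_le_norm _).trans (hz i)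
  have sum_re : ∑ i, (z i).re = ∑ _i : ι, (1 : ℝ) := by
    rw [← Complex.re_sum, hsum]
    simp
  have re_eq : (z i).re = 1 :=
    (Finset.sum_eq_sum_iff_of_le fun i _ => re_le i).1 sum_re i (Finset.mem_univ i)
  have re_eq_norm : (z i).re = ‖z i‖ := le_antisymm (Complex.re_le_norm _) (re_eq ▸ hz i)
  rw [Complex.eq_re_of_ofReal_le (Complex.re_eq_norm.1 re_eq_norm), re_eq, Complex.ofReal_one]

lemma exists_neg_of_sum_sq_eq_sq_sum {ι R : Type*} [CommRing R] [LinearOrder R]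
    [IsStrictOrderedRing R] {s : Finset ι} {n : ι → R} (hsq : ∑ i ∈ s, n i ^ 2 = (∑ i ∈ s, n i) ^ 2)
    (hsum : ∑ i ∈ s, n i ≠ 0) (hne : ∀ i ∈ s, n i ≠ ∑ j ∈ s, n j) : ∃ i ∈ s, n i < 0 := by
  by_contra! hnonneg
  set S := ∑ i ∈ s, n i with hS
  have sum_mul_sub : ∑ i ∈ s, n i * (S - n i) = 0 := by
    simp_rw [mul_sub, ← sq, Finset.sum_sub_distrib, ← Finset.sum_mul, hsq, ← hS, sq, sub_self]
  have mul_sub_nonneg (i : ι) (hi : i ∈ s) : 0 ≤ n i * (S - n i) :=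
    mul_nonneg (hnonneg i hi) (sub_nonneg.2 (Finset.single_le_sum hnonneg hi))
  refine hsum (Finset.sum_eq_zero fun i hi => ?_)
  have mul_sub_eq_zero := (Finset.sum_eq_zero_iff_of_nonneg mul_sub_nonneg).1 sum_mul_sub i hi
  exact (mul_eq_zero.1 mul_sub_eq_zero).resolve_right (sub_ne_zero.2 (hne i hi).symm)

section Lines

variable {K V : Type*} [DivisionRing K] [AddCommGroup V] [Module K V]

lemma card_sub_one_dvd_card_subMulAction (S : SubMulAction Kˣ V) (h0 : (0 : V) ∉ S) :
    Nat.card K - 1 ∣ Nat.card S := by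
  have stabilizer_eq_bot (v : S) : MulAction.stabilizer Kˣ v = ⊥ := by
    refine (Subgroup.eq_bot_iff_forall _).2 fun r hr => Units.ext ?_
    have smul_eq : (r : K) • (v : V) = (1 : K) • (v : V) := by
      rw [one_smul]
      exact congrArg Subtype.val hr
    exact smul_left_injective K (ne_of_mem_of_not_mem v.2 h0) smul_eq
  rw [Nat.card_congr (MulAction.selfEquivOrbitsQuotientProd stabilizer_eq_bot), Nat.card_prod,
    Nat.card_units]
  exact dvd_mul_left _ _

lemma exists_card_filter_eq_one_add [Fintype K] [Fintype V] {P : V → Prop} (h0 : P 0)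
    (hsmul : ∀ (r : Kˣ) v, P v → P (r • v)) :
    ∃ N : ℕ, #{v | P v} = 1 + (Fintype.card K - 1) * N := by
  let S : SubMulAction Kˣ V :=
    { carrier := {v | P v ∧ v ≠ 0}
      smul_mem' := fun r v hv => ⟨hsmul r v hv.1, (smul_ne_zero_iff_ne r).2 hv.2⟩ }
  obtain ⟨N, hN⟩ := card_sub_one_dvd_card_subMulAction S fun h => h.2 rfl
  have card_erase : #(Finset.erase {v | P v} 0) = Nat.card S := by
    rw [Nat.card_eq_fintype_card, Fintype.card_of_subtype]
    intro v
    change v ∈ Finset.erase {v | P v} 0 ↔ P v ∧ v ≠ 0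
    rw [Finset.mem_erase, Finset.mem_filter_univ, and_comm]
  refine ⟨N, ?_⟩
  rw [← Nat.card_eq_fintype_card, ← hN, ← card_erase, add_comm,
    Finset.card_erase_add_one (by simpa using h0)]

end Lines

section PowerFunctions

variable {F : Type*} [Field F] [Fintype F]

lemma zpow_eq_zpow_of_modEq {e f : ℤ} (hef : e ≡ f [ZMOD (Fintype.card F : ℤ) - 1]) (u : Fˣ) :
    u ^ e = u ^ f := by
  refine zpow_eq_zpow_iff_modEq.2 (hef.of_dvd ?_)
  have orderOf_dvd := Int.natCast_dvd_natCast.2 (orderOf_dvd_card (x := u))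
  rwa [Fintype.card_units, Nat.cast_sub Fintype.card_pos, Nat.cast_one] at orderOf_dvd

lemma sum_zpow_units (e : ℤ) :
    ∑ u : Fˣ, ((u ^ e : Fˣ) : F) = if (Fintype.card F : ℤ) - 1 ∣ e then -1 else 0 := by
  have card_sub_one : (Fintype.card F : ℤ) - 1 = (Fintype.card F - 1 : ℕ) := by
    rw [Nat.cast_sub Fintype.card_pos, Nat.cast_one]
  obtain ⟨k, hk⟩ : ∃ k : ℕ, e ≡ k [ZMOD (Fintype.card F : ℤ) - 1] := by
    have card_ne : (Fintype.card F : ℤ) - 1 ≠ 0 :=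
      sub_ne_zero.2 (mod_cast (Fintype.one_lt_card (α := F)).ne')
    refine ⟨(e % ((Fintype.card F : ℤ) - 1)).toNat, ?_⟩
    rw [Int.toNat_of_nonneg (Int.emod_nonneg e card_ne)]
    exact (Int.mod_modEq e _).symm
  simp_rw [zpow_eq_zpow_of_modEq hk, zpow_natCast, Units.val_pow_eq_pow_val,
    FiniteField.sum_pow_units, hk.dvd_iff, card_sub_one, Int.natCast_dvd_natCast]

lemma zpow_bijective_of_gcd_eq_one {d : ℤ} (hd0 : d ≠ 0)
    (hd : Int.gcd d ((Fintype.card F : ℤ) - 1) = 1) : Function.Bijective fun x : F => x ^ d := by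
  refine Finite.surjective_iff_bijective.1 fun x => ?_
  obtain rfl | hx := eq_or_ne x 0
  · exact ⟨0, zero_zpow d hd0⟩
  obtain ⟨s, t, bezout⟩ := Int.isCoprime_iff_gcd_eq_one.2 hd
  have modEq_one : s * d ≡ 1 [ZMOD (Fintype.card F : ℤ) - 1] :=
    Int.modEq_iff_dvd.2 ⟨t, by linear_combination -bezout⟩
  have := congrArg Units.val (zpow_eq_zpow_of_modEq modEq_one (Units.mk0 x hx))
  refine ⟨x ^ s, ?_⟩
  simpa [← zpow_mul] using this

end PowerFunctions

section CanonicalCharacter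

variable (p : ℕ) [Fact p.Prime]

/-- The canonical additive character `canonicalAddChar p F` bundled as a homomorphism. -/
noncomputable def canonicalAddCharHom (F : Type*) [Field F] [Algebra (ZMod p) F] : AddChar F ℂ :=
  (ZMod.stdAddChar (N := p)).compAddMonoidHom (Algebra.trace (ZMod p) F).toAddMonoidHom

lemma canonicalAddCharHom_apply {F : Type*} [Field F] [Algebra (ZMod p) F] (x : F) :
    canonicalAddCharHom p F x = ZMod.stdAddChar (Algebra.trace (ZMod p) F x) := rfl

lemma canonicalAddChar_eq {F : Type} [Field F] [Fintype F] [Algebra (ZMod p) F] (x : F) :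
    canonicalAddChar p F x = canonicalAddCharHom p F x := by
  rw [canonicalAddCharHom_apply, ZMod.stdAddChar_apply, ZMod.toCircle_apply, canonicalAddChar]

lemma canonicalAddCharHom_eq_one_iff {F : Type*} [Field F] [Algebra (ZMod p) F] {x : F} :
    canonicalAddCharHom p F x = 1 ↔ Algebra.trace (ZMod p) F x = 0 := by
  rw [canonicalAddCharHom_apply, ← (ZMod.stdAddChar (N := p)).map_zero_eq_one,
    ZMod.injective_stdAddChar.eq_iff]

lemma canonicalAddCharHom_isPrimitive (F : Type*) [Field F] [Finite F] [Algebra (ZMod p) F] :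
    (canonicalAddCharHom p F).IsPrimitive := by
  refine AddChar.IsPrimitive.of_ne_one fun h => ?_
  obtain ⟨x, hx⟩ := Algebra.trace_surjective (ZMod p) F 1
  have trace_eq_zero := (canonicalAddCharHom_eq_one_iff p).1 (DFunLike.congr_fun h x)
  exact one_ne_zero (hx.symm.trans trace_eq_zero)

lemma canonicalAddCharHom_pow_char_pow {F : Type*} [Field F] [Finite F] [Algebra (ZMod p) F]
    (x : F) (k : ℕ) : canonicalAddCharHom p F (x ^ p ^ k) = canonicalAddCharHom p F x := by
  have trace_frobenius (y : F) : Algebra.trace (ZMod p) F (y ^ p) = Algebra.trace (ZMod p) F y := by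
    simpa using
      Algebra.trace_eq_of_algEquiv (FiniteField.frobeniusAlgEquivOfAlgebraic (ZMod p) F) y
  induction k with
  | zero => rw [pow_zero, pow_one]
  | succ k ih => rw [← ih, pow_succ, pow_mul, canonicalAddCharHom_apply, trace_frobenius,
      canonicalAddCharHom_apply]

lemma canonicalAddCharHom_trace (K : Type*) {L : Type*} [Field K] [Field L] [Finite L]
    [Algebra (ZMod p) K] [Algebra (ZMod p) L] [Algebra K L] (x : L) :
    canonicalAddCharHom p K (Algebra.trace K L x) = canonicalAddCharHom p L x := by
  have : IsScalarTower (ZMod p) K L := IsScalarTower.of_algebraMap_eq' (Subsingleton.elim _ _)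
  have : Finite K := Finite.of_injective _ (algebraMap K L).injective
  rw [canonicalAddCharHom_apply, canonicalAddCharHom_apply, Algebra.trace_trace]

end CanonicalCharacter

section WeilSum

variable (p : ℕ) [Fact p.Prime] {F : Type} [Field F] [Fintype F] [Algebra (ZMod p) F] {d : ℤ}

lemma weilSum_eq_sum_canonicalAddCharHom (d : ℤ) (a : F) :
    weilSum p F d a = ∑ x, canonicalAddCharHom p F (x ^ d + a * x) :=
  Finset.sum_congr rfl fun _ _ => canonicalAddChar_eq p _

lemma sum_weilSum (hd0 : d ≠ 0) : ∑ a : F, weilSum p F d a = Fintype.card F := by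
  simp_rw [weilSum_eq_sum_canonicalAddCharHom,
    sum_sum_addChar_add_mul (canonicalAddCharHom_isPrimitive p F), zero_zpow d hd0,
    AddChar.map_zero_eq_one, mul_one]

lemma sum_norm_sq_weilSum (d : ℤ) :
    ∑ a : F, (‖weilSum p F d a‖ : ℂ) ^ 2 = (Fintype.card F : ℂ) ^ 2 := by
  simp_rw [weilSum_eq_sum_canonicalAddCharHom]
  exact sum_norm_sq_sum_addChar_add_mul (canonicalAddCharHom_isPrimitive p F) (· ^ d)

lemma weilSum_zero (hd0 : d ≠ 0) (hd : Int.gcd d ((Fintype.card F : ℤ) - 1) = 1) :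
    weilSum p F d 0 = 0 := by
  simp_rw [weilSum_eq_sum_canonicalAddCharHom, zero_mul, add_zero]
  rw [(zpow_bijective_of_gcd_eq_one hd0 hd).sum_comp (canonicalAddCharHom p F)]
  simpa using AddChar.sum_mulShift (1 : F) (canonicalAddCharHom_isPrimitive p F)

end WeilSum

lemma ne_zero_of_not_isDegenerate {p q : ℕ} {d : ℤ} (hd : Int.gcd d ((q : ℤ) - 1) = 1)
    (hnd : ¬ IsDegenerate p q d) : d ≠ 0 := by
  rintro rfl
  rw [Int.gcd_zero_left] at hd
  exact hnd ⟨0, Int.modEq_of_dvd (Int.isUnit_iff_natAbs_eq.2 hd).dvd⟩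

section Nondegenerate

variable {p : ℕ} [Fact p.Prime] {F : Type} [Field F] [Fintype F] [Algebra (ZMod p) F] {d : ℤ}

lemma card_sub_one_dvd_mul_pow_sub_iff (hd : Int.gcd d ((Fintype.card F : ℤ) - 1) = 1) {i : ℕ}
    (hi : i < Module.finrank (ZMod p) F) :
    (Fintype.card F : ℤ) - 1 ∣ d * (p : ℤ) ^ i - d ↔ i = 0 := by
  refine ⟨fun h => ?_, by rintro rfl; simp⟩
  have card_eq : (Fintype.card F : ℤ) = (p : ℤ) ^ Module.finrank (ZMod p) F := by
    exact_mod_cast (Module.card_eq_pow_finrank (K := ZMod p) (V := F)).trans (by rw [ZMod.card])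
  have one_lt : (1 : ℤ) < p := mod_cast (Fact.out : p.Prime).one_lt
  have dvd_pow_sub_one : (Fintype.card F : ℤ) - 1 ∣ (p : ℤ) ^ i - 1 := by
    refine (Int.isCoprime_iff_gcd_eq_one.2 hd).symm.dvd_of_dvd_mul_left ?_
    rwa [mul_sub, mul_one]
  by_contra hi0
  have pow_lt := pow_lt_pow_right₀ one_lt hi
  have one_lt_pow := one_lt_pow₀ one_lt hi0
  have := Int.le_of_dvd (sub_pos.2 one_lt_pow) dvd_pow_sub_one
  lia

lemma sum_units_zpow_neg_mul_trace (hd : Int.gcd d ((Fintype.card F : ℤ) - 1) = 1)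
    (hnd : ¬ IsDegenerate p (Fintype.card F) d) (a : F) :
    ∑ u : Fˣ, ((u ^ (-d) : Fˣ) : F) *
      algebraMap (ZMod p) F (Algebra.trace (ZMod p) F ((u : F) ^ d + a * u)) = -1 := by
  have : CharP F p := (Algebra.charP_iff (ZMod p) F p).1 inferInstance
  have expand (u : Fˣ) (i : ℕ) : ((u ^ (-d) : Fˣ) : F) * ((u : F) ^ d + a * u) ^ p ^ i =
      ((u ^ (d * (p : ℤ) ^ i - d) : Fˣ) : F) + a ^ p ^ i * ((u ^ ((p : ℤ) ^ i - d) : Fˣ) : F) := by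
    rw [add_pow_char_pow, mul_pow, sub_eq_neg_add, sub_eq_neg_add, zpow_add, zpow_add, zpow_mul]
    norm_cast
    push_cast
    ring
  have not_dvd (i : ℕ) : ¬ (Fintype.card F : ℤ) - 1 ∣ (p : ℤ) ^ i - d :=
    fun h => hnd ⟨i, Int.modEq_of_dvd h⟩
  simp_rw [FiniteField.algebraMap_trace_eq_sum_pow, Nat.card_zmod, Finset.mul_sum, expand]
  rw [Finset.sum_comm]
  simp_rw [Finset.sum_add_distrib, ← Finset.mul_sum, sum_zpow_units, if_neg (not_dvd _), mul_zero,
    Finset.sum_const_zero, add_zero]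
  calc ∑ i ∈ Finset.range (Module.finrank (ZMod p) F),
        (if (Fintype.card F : ℤ) - 1 ∣ d * (p : ℤ) ^ i - d then (-1 : F) else 0)
      = ∑ i ∈ Finset.range (Module.finrank (ZMod p) F), if i = 0 then (-1 : F) else 0 :=
        Finset.sum_congr rfl fun i hi => by
          simp_rw [card_sub_one_dvd_mul_pow_sub_iff hd (Finset.mem_range.1 hi)]
    _ = -1 := by
        rw [Finset.sum_ite_eq' _ 0, if_pos (Finset.mem_range.2 Module.finrank_pos)]

lemma weilSum_ne_card (hd : Int.gcd d ((Fintype.card F : ℤ) - 1) = 1)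
    (hnd : ¬ IsDegenerate p (Fintype.card F) d) (a : F) :
    weilSum p F d a ≠ Fintype.card F := by
  rw [weilSum_eq_sum_canonicalAddCharHom]
  intro hW
  have trace_eq_zero (x : F) : Algebra.trace (ZMod p) F (x ^ d + a * x) = 0 :=
    (canonicalAddCharHom_eq_one_iff p).1 <|
      eq_one_of_sum_eq_card (fun _ => (AddChar.norm_apply _ _).le) hW x
  have := sum_units_zpow_neg_mul_trace hd hnd a
  simp [trace_eq_zero] at this

end Nondegenerate

section WeilTrace

variable (K : Type*) {L : Type*} [Field K] [Field L] [Algebra K L]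

/-- The `K`-valued function `y ↦ Tr_{L/K} (y ^ d + (a y) ^ e)`. For `e = p ^ j` its composition with
the canonical character of `K` has sum `W_{L,d}(a)` over `L`; the Frobenius twist of the linear term
makes it homogeneous when `d ≡ e` modulo `|K| - 1`. -/
noncomputable def weilTrace (d : ℤ) (e : ℕ) (a y : L) : K :=
  Algebra.trace K L (y ^ d + (a * y) ^ e)

variable {K} in
lemma weilTrace_smul [Fintype K] {d : ℤ} {e : ℕ} (hde : d ≡ e [ZMOD (Fintype.card K : ℤ) - 1])
    (a y : L) (r : Kˣ) :
    weilTrace K d e a (r • y) = (r : K) ^ e * weilTrace K d e a y := by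
  have zpow_eq : (r : K) ^ d = (r : K) ^ e := by
    simpa using congrArg Units.val (zpow_eq_zpow_of_modEq hde r)
  have smul_eq : (r • y) ^ d + (a * r • y) ^ e = (r : K) ^ e • (y ^ d + (a * y) ^ e) := by
    rw [Units.smul_def, Algebra.smul_def, Algebra.smul_def, mul_zpow, ← map_zpow₀, zpow_eq, map_pow]
    ring
  rw [weilTrace, smul_eq, map_smul, smul_eq_mul, weilTrace]

end WeilTrace

section DegenerateSubfield

variable {p : ℕ} [Fact p.Prime] {K L : Type} [Field K] [Fintype K] [Field L] [Fintype L]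
  [Algebra (ZMod p) K] [Algebra (ZMod p) L] [Algebra K L] {d : ℤ} {j : ℕ}

lemma weilSum_eq_sum_weilTrace (hdeg : d ≡ (p : ℤ) ^ j [ZMOD (Fintype.card K : ℤ) - 1]) (a : L)
    (r : Kˣ) :
    weilSum p L d a =
      ∑ y, canonicalAddCharHom p K ((r : K) ^ p ^ j * weilTrace K d (p ^ j) a y) := by
  have hde : d ≡ (p ^ j : ℕ) [ZMOD (Fintype.card K : ℤ) - 1] := mod_cast hdeg
  simp_rw [← weilTrace_smul hde]
  rw [(MulAction.bijective r).sum_comp fun y =>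
    canonicalAddCharHom p K (weilTrace K d (p ^ j) a y), weilSum_eq_sum_canonicalAddCharHom]
  simp_rw [weilTrace, canonicalAddCharHom_trace, AddChar.map_add_eq_mul,
    canonicalAddCharHom_pow_char_pow]

lemma card_sub_one_mul_weilSum_add_card
    (hdeg : d ≡ (p : ℤ) ^ j [ZMOD (Fintype.card K : ℤ) - 1]) (a : L) :
    ((Fintype.card K : ℂ) - 1) * weilSum p L d a + Fintype.card L =
      Fintype.card K * #{y | weilTrace K d (p ^ j) a y = 0} := by
  have : CharP K p := (Algebra.charP_iff (ZMod p) K p).1 inferInstance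
  rw [← sum_sum_addChar_mul (canonicalAddCharHom_isPrimitive p K),
    ← (bijective_iterateFrobenius K p j).sum_comp]
  simp_rw [iterateFrobenius_def]
  rw [← Finset.sum_erase_add _ _ (Finset.mem_univ (0 : K))]
  congr 1
  · have summand_eq (r : K) (hr : r ∈ Finset.univ.erase 0) :
        ∑ y, canonicalAddCharHom p K (r ^ p ^ j * weilTrace K d (p ^ j) a y) = weilSum p L d a :=
      (weilSum_eq_sum_weilTrace hdeg a (Units.mk0 r (Finset.ne_of_mem_erase hr))).symm
    rw [Finset.sum_congr rfl summand_eq, Finset.sum_const, Finset.card_erase_of_mem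
      (Finset.mem_univ _), Finset.card_univ, nsmul_eq_mul, Nat.cast_sub Fintype.card_pos,
      Nat.cast_one]
  · simp [(Fact.out : p.Prime).ne_zero]

lemma exists_weilSum_eq_card_mul_sub_geom_sum (hd0 : d ≠ 0)
    (hdeg : d ≡ (p : ℤ) ^ j [ZMOD (Fintype.card K : ℤ) - 1]) (a : L) :
    ∃ N : ℕ, weilSum p L d a = Fintype.card K *
      ((N : ℂ) - ∑ i ∈ Finset.range (Module.finrank K L - 1), (Fintype.card K : ℂ) ^ i) := by
  have hde : d ≡ (p ^ j : ℕ) [ZMOD (Fintype.card K : ℤ) - 1] := mod_cast hdeg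
  have one_lt : 1 < Fintype.card K := Fintype.one_lt_card
  obtain ⟨N, hN⟩ := exists_card_filter_eq_one_add (K := K)
    (P := fun y : L => weilTrace K d (p ^ j) a y = 0)
    (by simp [weilTrace, zero_zpow d hd0, (Fact.out : p.Prime).ne_zero])
    fun r y hy => by rw [weilTrace_smul hde, hy, mul_zero]
  have count := card_sub_one_mul_weilSum_add_card hdeg a
  have card_eq : (Fintype.card L : ℂ) =
      Fintype.card K * (Fintype.card K : ℂ) ^ (Module.finrank K L - 1) := by
    rw [Module.card_eq_pow_finrank (K := K) (V := L), Nat.cast_pow, mul_pow_sub_one]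
    exact Module.finrank_pos.ne'
  refine ⟨N, mul_left_cancel₀ (sub_ne_zero.2 (mod_cast one_lt.ne') :
    (Fintype.card K : ℂ) - 1 ≠ 0) ?_⟩
  rw [hN, card_eq] at count
  push_cast [Nat.cast_sub one_lt.le] at count
  linear_combination count +
    Fintype.card K * mul_geom_sum (Fintype.card K : ℂ) (Module.finrank K L - 1)

lemma exists_weilSum_eq_card_mul_sub_one (h2 : Module.finrank K L = 2) (hd0 : d ≠ 0)
    (hdeg : IsDegenerate p (Fintype.card K) d) (a : L) :
    ∃ N : ℕ, weilSum p L d a = Fintype.card K * ((N : ℂ) - 1) := by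
  obtain ⟨j, hj⟩ := hdeg
  simpa [h2] using exists_weilSum_eq_card_mul_sub_geom_sum hd0 hj a

lemma exists_weilSum_eq_neg_card (h2 : Module.finrank K L = 2)
    (hd : Int.gcd d ((Fintype.card L : ℤ) - 1) = 1) (hdegK : IsDegenerate p (Fintype.card K) d)
    (hndL : ¬ IsDegenerate p (Fintype.card L) d) :
    ∃ a : L, weilSum p L d a = -(Fintype.card K : ℂ) := by
  have hd0 := ne_zero_of_not_isDegenerate hd hndL
  have card_ne : (Fintype.card K : ℂ) ≠ 0 := mod_cast Fintype.card_ne_zero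
  have card_eq : (Fintype.card L : ℂ) = (Fintype.card K : ℂ) ^ 2 := by
    rw [Module.card_eq_pow_finrank (K := K) (V := L), h2, Nat.cast_pow]
  choose N hN using exists_weilSum_eq_card_mul_sub_one (L := L) h2 hd0 hdegK
  have sum_eq : ∑ a, ((N a : ℤ) - 1) = Fintype.card K := by
    have := sum_weilSum p (F := L) hd0
    simp_rw [hN, ← Finset.mul_sum, card_eq, sq] at this
    exact_mod_cast mul_left_cancel₀ card_ne this
  have sum_sq_eq : ∑ a, ((N a : ℤ) - 1) ^ 2 = (Fintype.card K : ℤ) ^ 2 := by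
    have := sum_norm_sq_weilSum p (F := L) d
    simp_rw [← Complex.mul_conj', hN, map_mul, map_sub, map_natCast, map_one, ← sq, mul_pow,
      ← Finset.mul_sum, card_eq, sq ((Fintype.card K : ℂ) ^ 2)] at this
    exact_mod_cast mul_left_cancel₀ (pow_ne_zero 2 card_ne) this
  have ne_sum (a : L) : (N a : ℤ) - 1 ≠ ∑ b, ((N b : ℤ) - 1) := by
    rw [sum_eq]
    intro h
    refine weilSum_ne_card hd hndL a ?_
    rw [hN, card_eq, sq]
    congr 1
    exact_mod_cast h
  obtain ⟨a, _, ha⟩ := exists_neg_of_sum_sq_eq_sq_sum (sum_eq ▸ sum_sq_eq)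
    (sum_eq ▸ mod_cast Fintype.card_ne_zero) fun a _ => ne_sum a
  have N_eq_zero : N a = 0 := by lia
  exact ⟨a, by rw [hN, N_eq_zero]; simp⟩

end DegenerateSubfield

theorem stmt18 (p : ℕ) [Fact p.Prime] (K L : Type) [Field K] [Fintype K]
    [Field L] [Fintype L] [CharP L p] [Algebra (ZMod p) L] [Algebra K L]
    [Algebra (ZMod p) K]
    (h2 : Module.finrank K L = 2)
    (d : ℤ) (hd : Int.gcd d ((Fintype.card L : ℤ) - 1) = 1)
    (hdegK : IsDegenerate p (Fintype.card K) d)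
    (hndL : ¬ IsDegenerate p (Fintype.card L) d) :
    (∀ a : L, ∃ n : ℤ, weilSum p L d a = (Fintype.card K : ℂ) * (n : ℂ)) ∧
    (∃ a : L, a ≠ 0 ∧ weilSum p L d a = -(Fintype.card K : ℂ)) ∧
    -- the minimum p-adic valuation of the values over a ∈ L^× equals [K : F_p]:
    ((∀ a : L, a ≠ 0 →
        ∃ n : ℤ, weilSum p L d a = (p : ℂ) ^ (Module.finrank (ZMod p) K) * (n : ℂ)) ∧
      ∃ a : L, a ≠ 0 ∧ ∃ n : ℤ,
        weilSum p L d a = (p : ℂ) ^ (Module.finrank (ZMod p) K) * (n : ℂ) ∧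
        ¬ (p : ℤ) ∣ n) := by
  have hd0 := ne_zero_of_not_isDegenerate hd hndL
  have card_eq : (Fintype.card K : ℂ) = (p : ℂ) ^ Module.finrank (ZMod p) K := by
    rw [Module.card_eq_pow_finrank (K := ZMod p) (V := K), ZMod.card, Nat.cast_pow]
  have integral (a : L) : ∃ n : ℤ, weilSum p L d a = (Fintype.card K : ℂ) * n := by
    obtain ⟨N, hN⟩ := exists_weilSum_eq_card_mul_sub_one h2 hd0 hdegK a
    exact ⟨N - 1, by simpa using hN⟩
  obtain ⟨a, ha⟩ := exists_weilSum_eq_neg_card h2 hd hdegK hndL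
  have ha0 : a ≠ 0 := by
    rintro rfl
    rw [weilSum_zero p hd0 hd, zero_eq_neg, Nat.cast_eq_zero] at ha
    exact Fintype.card_ne_zero ha
  have not_dvd : ¬ (p : ℤ) ∣ -1 := by
    rw [Int.dvd_neg]
    exact (Nat.prime_iff_prime_int.1 Fact.out).not_dvd_one
  exact ⟨integral, ⟨a, ha0, ha⟩, fun b _ => card_eq ▸ integral b,
    a, ha0, -1, by rw [ha, card_eq]; simp, not_dvd⟩
end
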